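/- Let I be an infinite set and Γ = Sym(I). Every subgroup of Γ of index at most |I| contains the pointwise stabilizer Γ_{(U)} of some subset U ⊆ I with |U| < |I|. -/

import Mathlib

namespace DNT

open Cardinal

/-- Index at most `|A|`, encoded by a colouring, forces full induced action on some piece. -/
theorem step1 {X A J : Type*} (G : Subgroup (Equiv.Perm X)) (c : Equiv.Perm X → A)
    (hc : ∀ x y, c x = c y → x⁻¹ * y ∈ G) (φ : A × J ↪ X) :
    ∃ a : A, ∀ π : Equiv.Perm J, ∃ g ∈ G, ∀ j, g (φ (a, j)) = φ (a, π j) := by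
  have key : ∃ a : A, ∀ π : Equiv.Perm J, ∃ h, c h = a ∧ ∀ j, h (φ (a, j)) = φ (a, π j) := by
    by_contra hcon
    push Not at hcon
    choose π hπ using hcon
    let F : Equiv.Perm (A × J) :=
      { toFun := fun p => (p.1, π p.1 p.2)
        invFun := fun p => (p.1, (π p.1).symm p.2)
        left_inv := fun p => by simp
        right_inv := fun p => by simp }
    obtain ⟨j, hj⟩ := hπ (c (F.viaEmbedding φ)) (F.viaEmbedding φ) rfl
    apply hj
    rw [Equiv.Perm.viaEmbedding_apply]
    rfl
  obtain ⟨a, ha⟩ := key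
  refine ⟨a, fun π => ?_⟩
  obtain ⟨h0, h0c, h0a⟩ := ha 1
  obtain ⟨h, h1, h2⟩ := ha π
  refine ⟨h0⁻¹ * h, hc _ _ (h0c.trans h1.symm), fun j => ?_⟩
  rw [Equiv.Perm.mul_apply, h2, Equiv.Perm.inv_eq_iff_eq, h0a]
  rfl

/-- Every permutation supported on `M` belongs to `S`. -/
def Full {I : Type*} (S : Subgroup (Equiv.Perm I)) (M : Set I) : Prop :=
  ∀ σ : Equiv.Perm I, (∀ x, x ∉ M → σ x = x) → σ ∈ S

theorem exists_prod_equiv (I : Type*) [Infinite I] : Nonempty (I × (I × (ℤ × I)) ≃ I) := by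
  have h1 : Cardinal.aleph0 ≤ #I := Cardinal.aleph0_le_mk I
  rw [← Cardinal.lift_mk_eq']
  simp [Cardinal.aleph0_mul_eq, Cardinal.mul_eq_self, h1]

theorem step2 {I : Type*} [Infinite I] (S : Subgroup (Equiv.Perm I)) (c : Equiv.Perm I → I)
    (hc : ∀ x y, c x = c y → x⁻¹ * y ∈ S) :
    ∃ M : Set I, #M = #I ∧ #(Mᶜ : Set I) = #I ∧ Full S M := by
  classical
  obtain ⟨e⟩ := exists_prod_equiv I
  obtain ⟨a₀, h₀⟩ := step1 S c hc e.toEmbedding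
  let ι : I × (ℤ × I) ↪ I := ⟨fun p => e (a₀, p), fun p q h => by simpa using h⟩
  have hι : ∀ π : Equiv.Perm (I × (ℤ × I)), ∃ g ∈ S, ∀ j, g (ι j) = ι (π j) := h₀
  let V := Equiv.Perm.viaEmbeddingHom ι
  have V1 : ∀ π j, V π (ι j) = ι (π j) := fun π j => Equiv.Perm.viaEmbedding_apply π ι j
  have V2 : ∀ π x, x ∉ Set.range ι → V π x = x := fun π x hx =>
    Equiv.Perm.viaEmbedding_apply_of_notMem π ι x hx
  obtain ⟨a, ha⟩ := step1 (S.comap V) (fun π => c (V π))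
    (fun x y h => by
      have := hc _ _ h
      rw [Subgroup.mem_comap, map_mul, map_inv]
      exact this) (Function.Embedding.refl (I × (ℤ × I)))
  simp only [Function.Embedding.refl_apply] at ha
  let m : I → I := fun x => ι (a, (0, x))
  have hm : Function.Injective m := fun x y h => by simpa [m] using h
  let m' : I → I := fun x => ι (a, (1, x))
  have hm' : Function.Injective m' := fun x y h => by simpa [m'] using h
  refine ⟨Set.range m, Cardinal.mk_range_eq m hm, ?_, ?_⟩
  · apply le_antisymm (Cardinal.mk_set_le _)
    rw [← Cardinal.mk_range_eq m' hm']
    apply Cardinal.mk_le_mk_of_subset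
    rintro _ ⟨x, rfl⟩ ⟨y, hy⟩
    simp [m, m'] at hy
  · intro σ hσ
    -- restrict `σ`
    have hinv : ∀ x, σ x ∈ Set.range m ↔ x ∈ Set.range m := by
      intro x
      constructor
      · intro h
        by_contra hx
        rw [hσ x hx] at h
        exact hx h
      · intro h
        by_contra hx
        have := hσ _ hx
        rw [EmbeddingLike.apply_eq_iff_eq] at this
        rw [this] at hx
        exact hx h
    have hf : ∃ f : Equiv.Perm I, ∀ x, σ (m x) = m (f x) := by
      let E := Equiv.ofInjective m hm
      refine ⟨(E.trans (σ.subtypePerm (p := fun x => x ∈ Set.range m) hinv)).trans E.symm, fun x => ?_⟩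
      have h1 : ∀ y : Set.range m, m (E.symm y) = y := fun y => Equiv.apply_ofInjective_symm hm y
      simp only [Equiv.trans_apply]
      rw [h1]
      rfl
    obtain ⟨f, hf⟩ := hf
    let t : Equiv.Perm (ℤ × I) :=
      { toFun := fun p => (p.1 + 1, p.2)
        invFun := fun p => (p.1 - 1, p.2)
        left_inv := fun p => by simp
        right_inv := fun p => by simp }
    let Φ : Equiv.Perm (I × (ℤ × I)) :=
      { toFun := fun p => if p.1 = a ∧ 0 ≤ p.2.1 then (p.1, (p.2.1, f p.2.2)) else p
        invFun := fun p => if p.1 = a ∧ 0 ≤ p.2.1 then (p.1, (p.2.1, f.symm p.2.2)) else p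
        left_inv := fun p => by
          by_cases h : p.1 = a ∧ 0 ≤ p.2.1
          · simp only [h, and_self, if_true, Equiv.symm_apply_apply]; ext <;> simp [h]
          · simp only [h, if_false]
        right_inv := fun p => by
          by_cases h : p.1 = a ∧ 0 ≤ p.2.1
          · simp only [h, and_self, if_true, Equiv.apply_symm_apply]; ext <;> simp [h]
          · simp only [h, if_false] }
    obtain ⟨h, hN, hh⟩ := ha t
    obtain ⟨g, hg, hgι⟩ := hι Φ
    have hN' : V h ∈ S := hN
    have hh' : ∀ k x, h⁻¹ (a, (k, x)) = (a, (k - 1, x)) := by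
      intro k x
      rw [Equiv.Perm.inv_eq_iff_eq, hh]
      simp [t]
    have hb : ∀ b p, b ≠ a → (h⁻¹ (b, p)).1 ≠ a := by
      intro b p hb h1
      have h2 : h (h⁻¹ (b, p)) = (b, p) := by simp
      have h3 : h⁻¹ (b, p) = (a, (h⁻¹ (b, p)).2) := Prod.ext h1 rfl
      rw [h3, hh] at h2
      exact hb (congrArg Prod.fst h2).symm
    have Φi : ∀ p, Φ⁻¹ p = if p.1 = a ∧ 0 ≤ p.2.1 then (p.1, (p.2.1, f.symm p.2.2)) else p :=
      fun p => rfl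
    have Φd : ∀ p, Φ p = if p.1 = a ∧ 0 ≤ p.2.1 then (p.1, (p.2.1, f p.2.2)) else p :=
      fun p => rfl
    have hgi : ∀ j, g⁻¹ (ι j) = ι (Φ⁻¹ j) := by
      intro j
      rw [Equiv.Perm.inv_eq_iff_eq, hgι]
      simp
    have hVi : ∀ j, (V h)⁻¹ (ι j) = ι (h⁻¹ j) := by
      intro j
      rw [Equiv.Perm.inv_eq_iff_eq, V1]
      simp
    have hσeq : σ = g * V h * g⁻¹ * (V h)⁻¹ := by
      ext x
      simp only [Equiv.Perm.mul_apply]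
      by_cases hx : x ∈ Set.range ι
      · obtain ⟨⟨b, k, y⟩, rfl⟩ := hx
        rw [hVi, hgi, V1, hgι]
        by_cases hba : b = a
        · subst hba
          rw [hh', Φi]
          by_cases hk : 1 ≤ k
          · have : σ (ι (b, (k, y))) = ι (b, (k, y)) := by
              apply hσ
              rintro ⟨z, hz⟩
              simp [m] at hz
              omega
            rw [this, if_pos ⟨rfl, by simpa using hk⟩, hh, Φd,
              if_pos ⟨rfl, by simp [t]; omega⟩]
            simp [t]
          · rw [if_neg (by simp; omega), hh, Φd]
            by_cases hk0 : k = 0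
            · subst hk0
              rw [if_pos (by simp [t])]
              have := hf y
              simp only [m] at this
              rw [this]
              simp [t]
            · rw [if_neg (by simp [t]; omega)]
              have : σ (ι (b, (k, y))) = ι (b, (k, y)) := by
                apply hσ
                rintro ⟨z, hz⟩
                simp [m] at hz
                omega
              rw [this]
              simp [t]
        · rw [Φi, if_neg (fun h => hb _ _ hba h.1),
            show h (h⁻¹ (b, (k, y))) = (b, (k, y)) by simp, Φd,
            if_neg (fun h => hba h.1)]
          apply hσ
          rintro ⟨z, hz⟩
          simp [m] at hz
          exact hba hz.1.symm
      · have hm1 : x ∉ Set.range m := fun ⟨z, hz⟩ => hx ⟨_, hz⟩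
        have h1 : (V h)⁻¹ x = x := by rw [Equiv.Perm.inv_eq_iff_eq, V2 _ _ hx]
        have h2 : g⁻¹ x ∉ Set.range ι := by
          rintro ⟨j, hj⟩
          apply hx
          refine ⟨Φ j, ?_⟩
          rw [← hgι, hj]
          simp
        rw [h1, V2 _ _ h2, hσ x hm1]
        simp
    rw [hσeq]
    exact S.mul_mem (S.mul_mem (S.mul_mem hg hN') (S.inv_mem hg)) (S.inv_mem hN')

/-- Extension of partial bijections inside `M`. -/
theorem extend {I : Type*} {K L M : Set I} (hK : K ⊆ M) (hL : L ⊆ M) (e : K ≃ L)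
    (hf : #(M \ K : Set I) = #(M \ L : Set I)) :
    ∃ p : Equiv.Perm I, (∀ x, x ∉ M → p x = x) ∧ ∀ x : K, p x = e x := by
  classical
  obtain ⟨f⟩ := Cardinal.eq.1 hf
  have aux : ∀ (K L : Set I) (_ : K ⊆ M) (_ : L ⊆ M) (e : K ≃ L)
      (f : (M \ K : Set I) ≃ (M \ L : Set I)) (F F' : I → I)
      (_ : ∀ x (h : x ∈ K), F x = e ⟨x, h⟩) (_ : ∀ x (h : x ∈ M \ K), F x = f ⟨x, h⟩)
      (_ : ∀ x, x ∉ M → F x = x)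
      (_ : ∀ x (h : x ∈ L), F' x = e.symm ⟨x, h⟩) (_ : ∀ x (h : x ∈ M \ L), F' x = f.symm ⟨x, h⟩)
      (_ : ∀ x, x ∉ M → F' x = x), Function.LeftInverse F' F := by
    intro K L hK hL e f F F' h1 h2 h3 h4 h5 h6 x
    by_cases hx : x ∈ K
    · rw [h1 x hx, h4 _ (e ⟨x, hx⟩).2]; simp
    · by_cases hM : x ∈ M
      · rw [h2 x ⟨hM, hx⟩, h5 _ (f ⟨x, ⟨hM, hx⟩⟩).2]; simp
      · rw [h3 x hM, h6 x hM]
  let F : I → I := fun x => if h : x ∈ K then e ⟨x, h⟩ else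
    if h' : x ∈ M \ K then f ⟨x, h'⟩ else x
  let F' : I → I := fun x => if h : x ∈ L then e.symm ⟨x, h⟩ else
    if h' : x ∈ M \ L then f.symm ⟨x, h'⟩ else x
  have a1 : ∀ x (h : x ∈ K), F x = e ⟨x, h⟩ := fun x h => by simp [F, h]
  have a2 : ∀ x (h : x ∈ M \ K), F x = f ⟨x, h⟩ := fun x h => by
    simp only [F, dif_neg h.2, dif_pos h]
  have a3 : ∀ x, x ∉ M → F x = x := fun x h => by
    simp only [F]
    rw [dif_neg (fun h' => h (hK h')), dif_neg (fun h' => h h'.1)]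
  have b1 : ∀ x (h : x ∈ L), F' x = e.symm ⟨x, h⟩ := fun x h => by simp [F', h]
  have b2 : ∀ x (h : x ∈ M \ L), F' x = f.symm ⟨x, h⟩ := fun x h => by
    simp only [F', dif_neg h.2, dif_pos h]
  have b3 : ∀ x, x ∉ M → F' x = x := fun x h => by
    simp only [F']
    rw [dif_neg (fun h' => h (hL h')), dif_neg (fun h' => h h'.1)]
  exact ⟨⟨F, F', aux K L hK hL e f F F' a1 a2 a3 b1 b2 b3,
    aux L K hL hK e.symm f.symm F' F b1 b2 b3 a1 a2 a3⟩, a3, fun x => a1 x x.2⟩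

theorem big_mono {I : Type*} {A B : Set I} (hA : #A = #I) (h : A ⊆ B) : #B = #I :=
  le_antisymm (Cardinal.mk_set_le _) (hA ▸ Cardinal.mk_le_mk_of_subset h)

theorem split {I : Type*} [Infinite I] {T : Set I} (hT : #T = #I) :
    ∃ K ⊆ T, #K = #I ∧ #(T \ K : Set I) = #I := by
  have h : #(I ⊕ I) = #T := by
    rw [hT, Cardinal.mk_sum, Cardinal.lift_id, Cardinal.add_eq_self (Cardinal.aleph0_le_mk I)]
  obtain ⟨e⟩ := Cardinal.eq.1 h
  have i1 : Function.Injective (fun x => (e (Sum.inl x) : I)) := fun x y h => by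
    simpa [Subtype.ext_iff.symm] using h
  have i2 : Function.Injective (fun x => (e (Sum.inr x) : I)) := fun x y h => by
    simpa [Subtype.ext_iff.symm] using h
  refine ⟨Set.range (fun x => (e (Sum.inl x) : I)), ?_, Cardinal.mk_range_eq _ i1, ?_⟩
  · rintro _ ⟨x, rfl⟩
    exact (e _).2
  · apply big_mono (Cardinal.mk_range_eq _ i2)
    rintro _ ⟨x, rfl⟩
    refine ⟨(e _).2, ?_⟩
    rintro ⟨y, hy⟩
    have := e.injective (Subtype.ext hy)
    cases this

theorem big_image {I : Type*} (σ : Equiv.Perm I) {A : Set I} (hA : #A = #I) :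
    #(σ '' A : Set I) = #I := by
  rw [Cardinal.mk_image_eq σ.injective, hA]

theorem big_union {I : Type*} [Infinite I] {A B C : Set I} (hC : #C = #I) (h : C ⊆ A ∪ B) :
    #A = #I ∨ #B = #I := by
  by_contra hcon
  push Not at hcon
  have h1 := lt_of_le_of_ne (Cardinal.mk_set_le A) hcon.1
  have h2 := lt_of_le_of_ne (Cardinal.mk_set_le B) hcon.2
  have h3 := Cardinal.add_lt_of_lt (Cardinal.aleph0_le_mk I) h1 h2
  have h4 := (Cardinal.mk_le_mk_of_subset h).trans (Cardinal.mk_union_le A B)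
  rw [hC] at h4
  exact absurd h3 (not_lt.2 h4)

theorem merge {I : Type*} [Infinite I] (S : Subgroup (Equiv.Perm I)) {M₁ M₂ : Set I}
    (h₁ : Full S M₁) (h₂ : Full S M₂) (hB : #(M₁ ∩ M₂ : Set I) = #I)
    (hC : #(M₂ \ M₁ : Set I) = #I) : Full S (M₁ ∪ M₂) := by
  intro σ hσ
  have key : ∃ K ⊆ M₂ \ M₁, #K = #I ∧ ∃ p ∈ S, (∀ x, x ∉ M₁ ∪ M₂ → p x = x) ∧
      ∀ x ∈ K, p (σ x) = x := by
    have hcov : M₂ \ M₁ ⊆ ((M₂ \ M₁) ∩ σ ⁻¹' M₁) ∪ ((M₂ \ M₁) ∩ σ ⁻¹' M₂) := by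
      intro x hx
      have : σ x ∈ M₁ ∪ M₂ := by
        by_contra h
        have h' := hσ _ h
        rw [EmbeddingLike.apply_eq_iff_eq] at h'
        rw [h'] at h
        exact h (Or.inr hx.1)
      rcases this with h | h
      · exact Or.inl ⟨hx, h⟩
      · exact Or.inr ⟨hx, h⟩
    rcases big_union hC hcov with hT | hT
    · obtain ⟨K, hKT, hK, hK'⟩ := split hT
      obtain ⟨B, hBT, hB1, hB2⟩ := split hB
      have e : Nonempty ((σ '' K : Set I) ≃ B) := by
        rw [← Cardinal.eq, big_image σ hK, hB1]
      obtain ⟨e⟩ := e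
      obtain ⟨s, hs1, hs2⟩ := extend (M := M₁) (K := σ '' K) (L := B)
        (by rintro _ ⟨x, hx, rfl⟩; exact (hKT hx).2) (fun x hx => (hBT hx).1) e (by
          rw [big_mono (big_image σ hK'), big_mono hB2]
          · exact fun x hx => ⟨hx.1.1, hx.2⟩
          · rintro _ ⟨x, hx, rfl⟩
            refine ⟨hx.1.2, ?_⟩
            rintro ⟨y, hy, hxy⟩
            exact hx.2 (σ.injective hxy ▸ hy))
      obtain ⟨p, hp1, hp2⟩ := extend (M := M₂) (K := B) (L := K)
        (fun x hx => (hBT hx).2) (fun x hx => (hKT hx).1.1)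
        (e.symm.trans (Equiv.Set.image σ K σ.injective).symm) (by
          rw [big_mono hB2, big_mono hK']
          · exact fun x hx => ⟨hx.1.1.1, hx.2⟩
          · exact fun x hx => ⟨hx.1.2, hx.2⟩)
      refine ⟨K, fun x hx => (hKT hx).1, hK, p * s, S.mul_mem (h₂ p hp1) (h₁ s hs1), ?_, ?_⟩
      · intro x hx
        rw [Equiv.Perm.mul_apply, hs1 x (fun h => hx (Or.inl h)), hp1 x (fun h => hx (Or.inr h))]
      · intro x hx
        rw [Equiv.Perm.mul_apply]
        have h3 := hs2 ⟨σ x, ⟨x, hx, rfl⟩⟩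
        simp only at h3
        rw [h3, hp2]
        simp only [Equiv.trans_apply, Equiv.symm_apply_apply]
        have : (⟨σ x, ⟨x, hx, rfl⟩⟩ : (σ '' K : Set I)) =
          Equiv.Set.image σ K σ.injective ⟨x, hx⟩ := rfl
        rw [this, Equiv.symm_apply_apply]
    · obtain ⟨K, hKT, hK, hK'⟩ := split hT
      obtain ⟨p, hp1, hp2⟩ := extend (M := M₂) (K := K) (L := σ '' K)
        (fun x hx => (hKT hx).1.1) (by rintro _ ⟨x, hx, rfl⟩; exact (hKT hx).2)
        (Equiv.Set.image σ K σ.injective) (by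
          rw [big_mono hK', big_mono (big_image σ hK')]
          · rintro _ ⟨x, hx, rfl⟩
            refine ⟨hx.1.2, ?_⟩
            rintro ⟨y, hy, hxy⟩
            exact hx.2 (σ.injective hxy ▸ hy)
          · exact fun x hx => ⟨hx.1.1.1, hx.2⟩)
      refine ⟨K, fun x hx => (hKT hx).1, hK, p⁻¹, S.inv_mem (h₂ p hp1), ?_, ?_⟩
      · intro x hx
        rw [Equiv.Perm.inv_eq_iff_eq, hp1 x (fun h => hx (Or.inr h))]
      · intro x hx
        rw [Equiv.Perm.inv_eq_iff_eq, hp2 ⟨x, hx⟩]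
        rfl
  obtain ⟨K, hKC, hK, p, hpS, hp1, hp2⟩ := key
  have e : Nonempty (K ≃ (M₂ \ M₁ : Set I)) := by
    rw [← Cardinal.eq, hK, hC]
  obtain ⟨e⟩ := e
  obtain ⟨t, ht1, ht2⟩ := extend (M := M₂) (hKC.trans Set.sdiff_subset) Set.sdiff_subset e (by
    rw [big_mono hB, big_mono hB]
    · exact fun x hx => ⟨hx.2, fun h => h.2 hx.1⟩
    · exact fun x hx => ⟨hx.2, fun h => (hKC h).2 hx.1⟩)
  have htS : t ∈ S := h₂ t ht1
  have hfin : t * (p * σ) * t⁻¹ ∈ S := by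
    apply h₁
    intro x hx
    simp only [Equiv.Perm.mul_apply]
    by_cases hx2 : x ∈ M₂
    · have h5 := ht2 (e.symm ⟨x, hx2, hx⟩)
      rw [Equiv.apply_symm_apply] at h5
      have h6 : t⁻¹ x = e.symm ⟨x, hx2, hx⟩ := by
        rw [Equiv.Perm.inv_eq_iff_eq, h5]
      rw [h6, hp2 _ (e.symm ⟨x, hx2, hx⟩).2, h5]
    · have hx3 : x ∉ M₁ ∪ M₂ := fun h => h.elim hx hx2
      have h6 : t⁻¹ x = x := by
        rw [Equiv.Perm.inv_eq_iff_eq, ht1 x hx2]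
      rw [h6, hσ x hx3, hp1 x hx3, ht1 x hx2]
  have h7 : σ = p⁻¹ * (t⁻¹ * (t * (p * σ) * t⁻¹) * t) := by group
  rw [h7]
  exact S.mul_mem (S.inv_mem hpS) (S.mul_mem (S.mul_mem (S.inv_mem htS) hfin) htS)

/-- More than `|I|` pairwise almost everywhere different functions. -/
theorem family (I : Type*) [Infinite I] : ∃ F : Set (I → I), #I < #F ∧
    ∀ f ∈ F, ∀ g ∈ F, f ≠ g → #{x | f x = g x} < #I := by
  classical
  obtain ⟨F, hF⟩ := zorn_subset
    {F : Set (I → I) | ∀ f ∈ F, ∀ g ∈ F, f ≠ g → #{x | f x = g x} < #I} (by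
      intro C hC hch
      refine ⟨⋃₀ C, ?_, fun s hs => Set.subset_sUnion_of_mem hs⟩
      rintro f ⟨s, hs, hfs⟩ g ⟨s', hs', hgs⟩ hne
      rcases hch.total hs hs' with h | h
      · exact hC hs' f (h hfs) g hgs hne
      · exact hC hs f hfs g (h hgs) hne)
  refine ⟨F, ?_, hF.prop⟩
  by_contra hcon
  have hle : #F ≤ #I := not_lt.1 hcon
  obtain ⟨j⟩ := Cardinal.le_def _ _ |>.1 hle
  obtain ⟨r, hr, hord⟩ := Cardinal.ord_eq I
  have hlt : ∀ a : I, #{b | r b a} < #I := by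
    intro a
    have h1 := Ordinal.typein_lt_type r a
    rw [← hord, Cardinal.lt_ord, Ordinal.card_typein] at h1
    exact h1
  have hlt' : ∀ a : I, #{b | ¬ r a b} < #I := by
    intro a
    have h2 : #(insert a {b | r b a} : Set I) < #I :=
      (Cardinal.mk_insert_le).trans_lt (Cardinal.add_lt_of_lt (Cardinal.aleph0_le_mk I) (hlt a)
        (Cardinal.one_lt_aleph0.trans_le (Cardinal.aleph0_le_mk I)))
    refine lt_of_le_of_lt (Cardinal.mk_le_mk_of_subset ?_) h2
    intro b hb
    rcases trichotomous_of r a b with h | h | h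
    · exact absurd h hb
    · exact Or.inl h.symm
    · exact Or.inr h
  have hex : ∀ a : I, ∃ y, ∀ f : F, r (j f) a → y ≠ f.1 a := by
    intro a
    by_contra hc
    push Not at hc
    choose φ h1 h2 using hc
    have hinj : Function.Injective (fun y => (⟨j (φ y), h1 y⟩ : {b | r b a})) := by
      intro y z hyz
      have h3 : φ y = φ z := j.injective (congrArg Subtype.val hyz)
      rw [h2 y, h2 z, h3]
    exact absurd (Cardinal.mk_le_of_injective hinj) (not_le.2 (hlt a))
  choose f hf using hex
  have hfF : ∀ g : F, #{x | f x = g.1 x} < #I := by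
    intro g
    refine lt_of_le_of_lt (Cardinal.mk_le_mk_of_subset ?_) (hlt' (j g))
    intro x hx hr'
    exact hf x g hr' hx
  have hfn : f ∉ F := by
    intro h
    have := hfF ⟨f, h⟩
    simp at this
  have hins : insert f F ∈ {F : Set (I → I) | ∀ f ∈ F, ∀ g ∈ F, f ≠ g →
      #{x | f x = g x} < #I} := by
    rintro g (rfl | hg) g' (rfl | hg') hne
    · exact absurd rfl hne
    · exact hfF ⟨g', hg'⟩
    · have := hfF ⟨g, hg⟩
      simpa only [eq_comm] using this
    · exact hF.prop g hg g' hg' hne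
  exact hfn (hF.le_of_ge hins (Set.subset_insert f F) (Set.mem_insert f F))

end DNT

open DNT Cardinal in
/-- Dixon–Neumann–Thomas: for an infinite set `I`, every subgroup of `Sym I` of index at
most `|I|` contains the pointwise stabilizer of some subset `U ⊆ I` with `|U| < |I|`. -/
theorem stmt_14 {I : Type*} [Infinite I]
    (S : Subgroup (Equiv.Perm I))
    (hS : Cardinal.mk (Equiv.Perm I ⧸ S) ≤ Cardinal.mk I) :
    ∃ U : Set I, Cardinal.mk U < Cardinal.mk I ∧
      ∀ σ : Equiv.Perm I, (∀ u ∈ U, σ u = u) → σ ∈ S := by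
  classical
  obtain ⟨i⟩ := Cardinal.le_def _ _ |>.1 hS
  let c : Equiv.Perm I → I := fun g => i (QuotientGroup.mk g)
  have hc : ∀ x y, c x = c y → x⁻¹ * y ∈ S := fun x y h =>
    QuotientGroup.eq.1 (i.injective h)
  obtain ⟨M, hM, hM', hfull⟩ := step2 S c hc
  obtain ⟨F, hF, hFd⟩ := family I
  have hb : Nonempty (I × I ≃ I) := by
    rw [← Cardinal.eq, Cardinal.mk_prod, Cardinal.lift_id,
      Cardinal.mul_eq_self (Cardinal.aleph0_le_mk I)]
  obtain ⟨b⟩ := hb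
  let Γ : (I → I) → Set I := fun f => Set.range (fun x => b (x, f x))
  have hΓ : ∀ f, #(Γ f) = #I := fun f => Cardinal.mk_range_eq _ (fun x y h => by
    have := b.injective h
    exact congrArg Prod.fst this)
  have hΓm : ∀ f x y, b (x, y) ∈ Γ f ↔ f x = y := by
    intro f x y
    constructor
    · rintro ⟨z, hz⟩
      have := b.injective hz
      simp only [Prod.mk.injEq] at this
      rw [← this.1, this.2]
    · rintro rfl
      exact ⟨x, rfl⟩
  have hΓ2 : ∀ f g, #(((Γ f)ᶜ ∩ (Γ g)ᶜ : Set I)) = #I := by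
    intro f g
    have : ∀ x, ∃ y, y ≠ f x ∧ y ≠ g x := by
      intro x
      obtain ⟨y, hy⟩ := Infinite.exists_notMem_finset ({f x, g x} : Finset I)
      simp only [Finset.mem_insert, Finset.mem_singleton, not_or] at hy
      exact ⟨y, hy⟩
    choose k hk1 hk2 using this
    apply big_mono (hΓ k)
    rintro _ ⟨x, rfl⟩
    simp only [Set.mem_inter_iff, Set.mem_compl_iff, hΓm]
    exact ⟨fun h => hk1 x h.symm, fun h => hk2 x h.symm⟩
  have hg : ∀ f, ∃ g : Equiv.Perm I, ∀ x, g x ∈ M ↔ x ∉ Γ f := by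
    intro f
    have e : Nonempty (Γ f ≃ (Mᶜ : Set I)) := by rw [← Cardinal.eq, hΓ, hM']
    obtain ⟨e⟩ := e
    obtain ⟨p, -, hp⟩ := extend (M := Set.univ) (Set.subset_univ _) (Set.subset_univ _) e (by
      rw [← Set.compl_eq_univ_sdiff, ← Set.compl_eq_univ_sdiff, compl_compl, hM]
      have := hΓ2 f f
      rwa [Set.inter_self] at this)
    refine ⟨p, fun x => ⟨fun h hx => ?_, fun h => ?_⟩⟩
    · have h1 := hp ⟨x, hx⟩
      simp only at h1
      rw [h1] at h
      exact (e ⟨x, hx⟩).2 h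
    · by_contra hx
      have h1 := hp (e.symm ⟨p x, hx⟩)
      rw [Equiv.apply_symm_apply] at h1
      have h2 := p.injective h1
      exact h (h2 ▸ (e.symm ⟨p x, hx⟩).2)
  choose g hg using hg
  have hnot : ¬ Function.Injective (fun f : F => c (g f.1)⁻¹) := fun h =>
    absurd (Cardinal.mk_le_of_injective h) (not_le.2 hF)
  simp only [Function.Injective, not_forall] at hnot
  obtain ⟨f, f', hff, hne⟩ := hnot
  have hkS : g f.1 * (g f'.1)⁻¹ ∈ S := by
    have := hc _ _ hff
    rwa [inv_inv] at this
  set k := g f.1 * (g f'.1)⁻¹ with hk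
  have hkM : ∀ x, g f.1 x ∈ k '' M ↔ x ∉ Γ f'.1 := by
    intro x
    rw [← hg]
    have : g f.1 x = k (g f'.1 x) := by simp [hk]
    rw [this, k.injective.mem_set_image]
  have hfull2 : Full S (k '' M) := by
    intro σ hσ
    have h1 : k⁻¹ * σ * k ∈ S := by
      apply hfull
      intro x hx
      simp only [Equiv.Perm.mul_apply]
      rw [hσ (k x) (by rwa [k.injective.mem_set_image])]
      simp
    have h2 : σ = k * (k⁻¹ * σ * k) * k⁻¹ := by group
    rw [h2]
    exact S.mul_mem (S.mul_mem hkS h1) (S.inv_mem hkS)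
  have hsmall : #(Γ f.1 ∩ Γ f'.1 : Set I) < #I := by
    have h1 := hFd f.1 f.2 f'.1 f'.2 (fun h => hne (Subtype.ext h))
    refine lt_of_le_of_lt ?_ h1
    refine le_trans (Cardinal.mk_le_mk_of_subset ?_)
      (Cardinal.mk_image_le (f := fun x => b (x, f.1 x)) (s := {x | f.1 x = f'.1 x}))
    rintro _ ⟨⟨x, rfl⟩, hx⟩
    rw [hΓm] at hx
    exact ⟨x, hx.symm, rfl⟩
  have hdiff : #(Γ f.1 \ Γ f'.1 : Set I) = #I := by
    rcases big_union (hΓ f.1) (A := Γ f.1 ∩ Γ f'.1) (B := Γ f.1 \ Γ f'.1)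
      (by rw [Set.inter_union_sdiff]) with h | h
    · exact absurd h hsmall.ne
    · exact h
  have hres := merge S hfull hfull2
    (big_mono (big_image (g f.1) (hΓ2 f.1 f'.1)) (by
      rintro _ ⟨x, hx, rfl⟩
      exact ⟨(hg _ _).2 hx.1, (hkM _).2 hx.2⟩))
    (big_mono (big_image (g f.1) hdiff) (by
      rintro _ ⟨x, hx, rfl⟩
      exact ⟨(hkM _).2 hx.2, fun h => (hg _ _).1 h hx.1⟩))
  refine ⟨(M ∪ k '' M)ᶜ, ?_, fun σ hσ => hres σ hσ⟩
  refine lt_of_le_of_lt ?_ hsmall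
  refine le_trans (Cardinal.mk_le_mk_of_subset ?_)
      (Cardinal.mk_image_le (f := g f.1) (s := Γ f.1 ∩ Γ f'.1))
  intro y hy
  obtain ⟨x, rfl⟩ := (g f.1).surjective y
  simp only [Set.mem_compl_iff, Set.mem_union, not_or, hg, hkM, not_not] at hy
  exact ⟨x, hy, rfl⟩
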